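/- arXiv:1905.11813 — 5 statements merged into one kernel-verified Lean document; each statement's English description precedes it below -/
import Mathlib

section
/- The iterated sum ∑_{n=0}^{∞} (1/2ⁿ) · ∑_{k=0}^{n} (−1)^{k+1} · C(n,k) · ln(k+1) converges, and its value equals ln(π/2). -/
open Real

/-!
Write `F n x = ∑ k, (-1)^k C(n,k) log (x + k)`, the `n`-th iterated difference of `log` under
`u ↦ u x - u (x + 1)`; the series is `-f 1`, where `f x = ∑ n, F n x / 2 ^ n`.

The derivative of `F n` is the `n`-th iterated difference of `1 / x`, which is
`n! / (x (x + 1) ⋯ (x + n)) > 0`. So every `F n` is increasing, i.e. `F (n + 1) ≤ 0`; applied twice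
this gives `-1 / x ≤ F 1 x ≤ F (n + 1) x ≤ 0`, hence convergence of `f x` and `|f x - log x| ≤ 1 / x`.

Shifting the index in the series gives `f x + f (x + 1) = 2 log x`. Iterating it from `1` yields
`f 1 + log (W M) = f (2 M + 1) - log (2 M + 1)`, with `W M` the Wallis partial product. The
right-hand side tends to `0` and `W M` tends to `π / 2`.
-/

namespace AltBinomLog

open Filter Topology

/-- The iterated differences of `log` under the operator `u ↦ (x ↦ u x - u (x + 1))`, that is,
`(-1) ^ n` times the `n`-th forward difference. -/
noncomputable def F : ℕ → ℝ → ℝ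
  | 0, x => Real.log x
  | n + 1, x => F n x - F n (x + 1)

/-- The closed form `n! / (x (x + 1) ⋯ (x + n))` of the iterated differences of `1 / x`. -/
noncomputable def g (n : ℕ) (x : ℝ) : ℝ :=
  n.factorial / ∏ i ∈ Finset.range (n + 1), (x + i)

lemma g_pos (n : ℕ) {x : ℝ} (hx : 0 < x) : 0 < g n x := by
  unfold g
  have : 0 < ∏ i ∈ Finset.range (n + 1), (x + i) := Finset.prod_pos fun i _ => by positivity
  positivity

lemma g_succ (n : ℕ) {x : ℝ} (hx : 0 < x) : g (n + 1) x = g n x - g n (x + 1) := by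
  unfold g
  -- Both denominators share the factor `(x + 1) ⋯ (x + n)`.
  have h1 : ∏ i ∈ Finset.range (n + 1), (x + i)
      = (∏ i ∈ Finset.range n, (x + 1 + i)) * x := by
    rw [Finset.prod_range_succ']
    congr 1
    · exact Finset.prod_congr rfl fun i _ => by push_cast; ring
    · simp
  have h2 : ∏ i ∈ Finset.range (n + 1), (x + 1 + i)
      = (∏ i ∈ Finset.range n, (x + 1 + i)) * (x + 1 + n) := Finset.prod_range_succ _ _
  rw [Finset.prod_range_succ _ (n + 1), h1, h2, Nat.factorial_succ]
  have : 0 < ∏ i ∈ Finset.range n, (x + 1 + i) := Finset.prod_pos fun i _ => by positivity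
  push_cast
  have h3 : x + ((n : ℝ) + 1) ≠ 0 := by positivity
  have h4 : x + 1 + (n : ℝ) ≠ 0 := by positivity
  field_simp
  ring

lemma hasDerivAt_F (n : ℕ) {x : ℝ} (hx : 0 < x) : HasDerivAt (F n) (g n x) x := by
  induction n generalizing x with
  | zero => simpa [F, g] using Real.hasDerivAt_log hx.ne'
  | succ n ih =>
    rw [g_succ n hx]
    exact (ih hx).sub ((ih (by positivity : 0 < x + 1)).comp_add_const x 1)

lemma F_succ_nonpos (n : ℕ) {x : ℝ} (hx : 0 < x) : F (n + 1) x ≤ 0 := by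
  have hmono : MonotoneOn (F n) (Set.Ioi 0) :=
    monotoneOn_of_deriv_nonneg (convex_Ioi 0)
      (fun y hy => (hasDerivAt_F n hy).continuousAt.continuousWithinAt)
      (fun y hy => (hasDerivAt_F n (interior_subset hy)).differentiableAt.differentiableWithinAt)
      (fun y hy => by
        rw [(hasDerivAt_F n (interior_subset hy)).deriv]
        exact (g_pos n (interior_subset hy)).le)
  have := hmono (Set.mem_Ioi.2 hx) (Set.mem_Ioi.2 (by positivity : 0 < x + 1)) (by linarith)
  simp only [F]
  linarith

lemma abs_F_succ_le (n : ℕ) {x : ℝ} (hx : 0 < x) : |F (n + 1) x| ≤ 1 / x := by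
  rw [abs_of_nonpos (F_succ_nonpos n hx)]
  induction n with
  | zero =>
    have h : Real.log ((x + 1) / x) ≤ (x + 1) / x - 1 := Real.log_le_sub_one_of_pos (by positivity)
    rw [Real.log_div (by positivity) hx.ne'] at h
    have : (x + 1) / x - 1 = 1 / x := by field_simp; ring
    simp only [F]
    linarith
  | succ n ih =>
    -- `F (n + 2) x = F (n + 1) x - F (n + 1) (x + 1) ≥ F (n + 1) x`
    have h1 := F_succ_nonpos n (by positivity : 0 < x + 1)
    have h2 : F (n + 1 + 1) x = F (n + 1) x - F (n + 1) (x + 1) := rfl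
    linarith

lemma F_eq_sum (n : ℕ) (x : ℝ) : F n x =
    ∑ k ∈ Finset.range (n + 1), (-1 : ℝ) ^ k * (n.choose k) * Real.log (x + k) := by
  have h : ∀ (n : ℕ) (x : ℝ), F n x = (-1) ^ n * (fwdDiff 1)^[n] Real.log x := by
    intro n
    induction n with
    | zero => intro x; simp [F]
    | succ n ih =>
      intro x
      rw [Function.iterate_succ_apply', fwdDiff, F, ih, ih]
      ring
  rw [h, fwdDiff_iter_eq_sum_shift, Finset.mul_sum]
  refine Finset.sum_congr rfl fun k hk => ?_
  obtain ⟨j, rfl⟩ := Nat.exists_eq_add_of_le (Nat.lt_succ_iff.1 (Finset.mem_range.1 hk))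
  have hj : ((-1 : ℝ) ^ j) * (-1) ^ j = 1 := by rw [← mul_pow]; simp
  simp only [Nat.add_sub_cancel_left, zsmul_eq_mul, nsmul_eq_mul, mul_one]
  push_cast
  rw [pow_add]
  linear_combination ((-1 : ℝ) ^ k * ((k + j).choose k) * Real.log (x + k)) * hj

lemma norm_term_le (n : ℕ) {x : ℝ} (hx : 0 < x) :
    ‖F (n + 1) x / 2 ^ (n + 1)‖ ≤ 1 / x / 2 / 2 ^ n := by
  rw [norm_div, Real.norm_eq_abs, norm_pow, Real.norm_ofNat, div_div (1 / x), ← pow_succ']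
  gcongr
  exact abs_F_succ_le n hx

lemma summable_F {x : ℝ} (hx : 0 < x) : Summable fun n => F n x / 2 ^ n :=
  (summable_nat_add_iff 1).1 <|
    Summable.of_norm_bounded (summable_geometric_two' (1 / x)) fun n => norm_term_le n hx

/-- Twice the Euler transform of the divergent series `∑ k, (-1) ^ k * log (x + k)`. -/
noncomputable def f (x : ℝ) : ℝ := ∑' n, F n x / 2 ^ n

lemma f_eq {x : ℝ} (hx : 0 < x) : f x = Real.log x + ∑' n, F (n + 1) x / 2 ^ (n + 1) := by
  rw [f, (summable_F hx).tsum_eq_zero_add]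
  simp [F]

lemma abs_f_sub_log_le {x : ℝ} (hx : 0 < x) : |f x - Real.log x| ≤ 1 / x := by
  rw [f_eq hx, add_sub_cancel_left]
  exact tsum_of_norm_bounded (hasSum_geometric_two' (1 / x)) fun n => norm_term_le n hx

lemma f_add_f {x : ℝ} (hx : 0 < x) : f (x + 1) = 2 * Real.log x - f x := by
  have hs := summable_F hx
  have h1 : f (x + 1) = ∑' n, (F n x / 2 ^ n - 2 * (F (n + 1) x / 2 ^ (n + 1))) := by
    refine tsum_congr fun n => ?_
    simp only [F, pow_succ]
    field_simp
    ring
  have hs' : Summable fun n => F (n + 1) x / 2 ^ (n + 1) := (summable_nat_add_iff 1).2 hs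
  rw [h1, hs.tsum_sub (hs'.mul_left 2), tsum_mul_left]
  have h2 := f_eq hx
  have h3 : ∑' n, F n x / 2 ^ n = f x := rfl
  linarith

lemma f_one_add_log_W (M : ℕ) :
    f 1 + Real.log (Real.Wallis.W M) = f (2 * M + 1) - Real.log (2 * M + 1) := by
  induction M with
  | zero => simp [Real.Wallis.W]
  | succ M ih =>
    have e1 := f_add_f (by positivity : (0 : ℝ) < 2 * M + 1)
    have e2 := f_add_f (by positivity : (0 : ℝ) < 2 * M + 1 + 1)
    have a1 : (2 * M + 1 : ℝ) ≠ 0 := by positivity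
    have a2 : (2 * M + 2 : ℝ) ≠ 0 := by positivity
    have a3 : (2 * M + 3 : ℝ) ≠ 0 := by positivity
    rw [Real.Wallis.W_succ, Real.log_mul (Real.Wallis.W_pos M).ne' (by positivity),
      Real.log_mul (by positivity) (by positivity), Real.log_div a2 a1, Real.log_div a2 a3]
    have b1 : (2 * ((M + 1 : ℕ) : ℝ) + 1) = 2 * M + 3 := by push_cast; ring
    have b2 : (2 * M + 1 + 1 : ℝ) = 2 * M + 2 := by ring
    have b3 : (2 * M + 2 + 1 : ℝ) = 2 * M + 3 := by ring
    rw [b2] at e1 e2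
    rw [b3] at e2
    rw [b1]
    linarith

lemma f_one : f 1 = -Real.log (π / 2) := by
  have h0 : Tendsto (fun M : ℕ => f (2 * M + 1) - Real.log (2 * M + 1)) atTop (𝓝 0) := by
    refine squeeze_zero_norm (a := fun M : ℕ => 1 / ((M : ℝ) + 1)) (fun M => ?_)
      tendsto_one_div_add_atTop_nhds_zero_nat
    refine (abs_f_sub_log_le (by positivity)).trans ?_
    gcongr
    have : (0 : ℝ) ≤ M := by positivity
    linarith
  have h1 : Tendsto (fun M : ℕ => f 1 + Real.log (Real.Wallis.W M)) atTop
      (𝓝 (f 1 + Real.log (π / 2))) :=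
    (Real.Wallis.tendsto_W_nhds_pi_div_two.log (by positivity)).const_add _
  have := tendsto_nhds_unique (h1.congr f_one_add_log_W) h0
  linarith

end AltBinomLog

/-- `∑_{n=0}^∞ 2⁻ⁿ ∑_{k=0}^n (-1)^{k+1} C(n,k) ln(k+1)` converges, with sum `ln(π/2)`. -/
theorem hasSum_alternating_binomial_log :
    HasSum (fun n : ℕ => (1 / 2 ^ n : ℝ) *
        ∑ k ∈ Finset.range (n + 1), (-1 : ℝ) ^ (k + 1) * (n.choose k) * Real.log (k + 1))
      (Real.log (π / 2)) := by
  have h := (AltBinomLog.summable_F one_pos).hasSum.neg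
  change HasSum _ (-AltBinomLog.f 1) at h
  rw [AltBinomLog.f_one, neg_neg] at h
  convert h using 2 with n
  rw [AltBinomLog.F_eq_sum, one_div, div_eq_inv_mul, ← mul_neg, ← Finset.sum_neg_distrib]
  congr 1
  refine Finset.sum_congr rfl fun k _ => ?_
  rw [add_comm (k : ℝ) 1]
  ring
end

section
/- The sequence of partial products ∏_{n=0}^{N} ( ∏_{k=0}^{n} (k+1)^{(−1)^{k+1} C(n,k)} )^{1/2ⁿ} converges to π/2 as N → ∞; equivalently, π/2 = √2 · (2²/3)^{1/4} · (2³·4/3³)^{1/8} · (2⁴·4⁴/(3⁶·5))^{1/16} · ⋯. -/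
/-!
The product is the exponential of the Euler transform of the logarithm of Wallis' product.

Let `wallisLog m = ∑_{k<m} (-1)^k (log (k+2) - log (k+1))`. Its even terms are the logarithms of
the partial Wallis products and its increments tend to `0`, so it converges to `log (π/2)`
(`tendsto_wallisLog`). Two applications of Pascal's rule show that the logarithm of the `N`-th
partial product in the theorem is exactly the binomial mean `2^{-N} ∑_m C(N,m) wallisLog m`
(`sum_eq_binomialMean`). Binomial means preserve limits (`tendsto_binomialMean`), because each
individual weight `C(N,m) / 2^N` tends to `0` while the weights sum to `1`.
-/

open Real Filter


/-- Partial sums of the alternating series `∑ (-1)^k log ((k+2)/(k+1))`, the logarithm of Wallis'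
product with its factors taken one at a time. -/
noncomputable def wallisLog (m : ℕ) : ℝ :=
  ∑ k ∈ Finset.range m, (-1 : ℝ) ^ k * (log ((k : ℝ) + 2) - log ((k : ℝ) + 1))

lemma wallisLog_succ (m : ℕ) :
    wallisLog (m + 1) = wallisLog m + (-1 : ℝ) ^ m * (log ((m : ℝ) + 2) - log ((m : ℝ) + 1)) := by
  simp [wallisLog, Finset.sum_range_succ]

lemma wallisLog_two_mul (m : ℕ) : wallisLog (2 * m) = log (Wallis.W m) := by
  induction m with
  | zero => simp [wallisLog, Wallis.W]
  | succ m ih =>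
    have h1 : (0 : ℝ) < 2 * m + 1 := by positivity
    have h2 : (0 : ℝ) < 2 * m + 2 := by positivity
    have h3 : (0 : ℝ) < 2 * m + 3 := by positivity
    rw [show 2 * (m + 1) = 2 * m + 1 + 1 by ring, wallisLog_succ, wallisLog_succ, ih,
      Wallis.W_succ, log_mul (Wallis.W_pos m).ne' (by positivity),
      log_mul (by positivity) (by positivity), log_div h2.ne' h1.ne', log_div h2.ne' h3.ne',
      pow_succ, (even_two_mul m).neg_one_pow]
    push_cast
    rw [show (2 * m + 1 + 2 : ℝ) = 2 * m + 3 by ring, show (2 * m + 1 + 1 : ℝ) = 2 * m + 2 by ring]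
    ring

lemma tendsto_log_sub_log :
    Tendsto (fun m : ℕ => log ((m : ℝ) + 2) - log ((m : ℝ) + 1)) atTop (nhds 0) := by
  have h := (tendsto_one_div_add_atTop_nhds_zero_nat (𝕜 := ℝ)).const_add 1
  rw [add_zero] at h
  have h2 := h.log one_ne_zero
  rw [log_one] at h2
  refine h2.congr fun m => ?_
  have h1 : (0 : ℝ) < (m : ℝ) + 1 := by positivity
  rw [← log_div (by positivity) h1.ne']
  congr 1
  field_simp
  ring

lemma tendsto_wallisLog : Tendsto wallisLog atTop (nhds (log (π / 2))) := by
  have heven : Tendsto (fun m => wallisLog (2 * m)) atTop (nhds (log (π / 2))) := by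
    simp only [wallisLog_two_mul]
    exact Wallis.tendsto_W_nhds_pi_div_two.log (by positivity)
  have hodd : Tendsto (fun m => wallisLog (2 * m + 1)) atTop (nhds (log (π / 2))) := by
    have h2 : Tendsto (fun m : ℕ => 2 * m) atTop atTop :=
      tendsto_id.const_mul_atTop' (by norm_num)
    have h := heven.add (tendsto_log_sub_log.comp h2)
    rw [add_zero] at h
    refine h.congr fun m => ?_
    rw [wallisLog_succ, (even_two_mul m).neg_one_pow, one_mul]
    rfl
  rw [Metric.tendsto_atTop] at *
  intro ε hε
  obtain ⟨a, ha⟩ := heven ε hε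
  obtain ⟨b, hb⟩ := hodd ε hε
  refine ⟨2 * a + 2 * b + 1, fun n hn => ?_⟩
  obtain ⟨k, rfl | rfl⟩ := n.even_or_odd'
  · exact ha k (by omega)
  · exact hb k (by omega)

/-- The mean of `v 0, …, v N` with respect to the binomial distribution of parameters
`N` and `1/2`. -/
noncomputable def binomialMean (v : ℕ → ℝ) (N : ℕ) : ℝ :=
  (∑ m ∈ Finset.range (N + 1), (N.choose m : ℝ) * v m) / 2 ^ N

lemma tendsto_choose_div_two_pow (m : ℕ) :
    Tendsto (fun N : ℕ => (N.choose m : ℝ) / 2 ^ N) atTop (nhds 0) := by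
  refine squeeze_zero (fun N => by positivity) (fun N => ?_)
    (tendsto_pow_const_div_const_pow_of_one_lt m (one_lt_two : (1 : ℝ) < 2))
  gcongr
  exact_mod_cast Nat.choose_le_pow N m

lemma sum_choose_real (N : ℕ) :
    ∑ m ∈ Finset.range (N + 1), (N.choose m : ℝ) = 2 ^ N := by
  exact_mod_cast Nat.sum_range_choose N

/-- Regularity of Euler summation (a case of the Silverman–Toeplitz theorem). -/
lemma tendsto_binomialMean {v : ℕ → ℝ} {L : ℝ} (hv : Tendsto v atTop (nhds L)) :
    Tendsto (binomialMean v) atTop (nhds L) := by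
  rw [Metric.tendsto_atTop] at hv
  rw [Metric.tendsto_atTop]
  intro ε hε
  obtain ⟨M, hM⟩ := hv (ε / 2) (half_pos hε)
  -- The finitely many terms `m < M` are negligible, their weights tending to `0`.
  have hhead : Tendsto (fun N : ℕ => ∑ m ∈ Finset.range M, (N.choose m : ℝ) / 2 ^ N * |v m - L|)
      atTop (nhds 0) := by
    have := tendsto_finsetSum (Finset.range M)
      fun m _ => (tendsto_choose_div_two_pow m).mul_const |v m - L|
    simpa using this
  obtain ⟨N₀, hN₀⟩ := (hhead.eventually (gt_mem_nhds (half_pos hε))).exists_forall_of_atTop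
  refine ⟨max N₀ M, fun N hN => ?_⟩
  have hp : (0 : ℝ) < 2 ^ N := by positivity
  have hMN : M ≤ N + 1 := by have := le_max_right N₀ M; omega
  have hw : ∑ m ∈ Finset.range (N + 1), (N.choose m : ℝ) / 2 ^ N = 1 := by
    rw [← Finset.sum_div, sum_choose_real, div_self hp.ne']
  have hdiff : binomialMean v N - L
      = ∑ m ∈ Finset.range (N + 1), (N.choose m : ℝ) / 2 ^ N * (v m - L) := by
    simp only [mul_sub, Finset.sum_sub_distrib, ← Finset.sum_mul, hw, one_mul, binomialMean,
      Finset.sum_div]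
    congr 1
    exact Finset.sum_congr rfl fun m _ => by ring
  have htail : ∑ m ∈ Finset.Ico M (N + 1), (N.choose m : ℝ) / 2 ^ N * |v m - L| ≤ ε / 2 := by
    calc ∑ m ∈ Finset.Ico M (N + 1), (N.choose m : ℝ) / 2 ^ N * |v m - L|
        ≤ ∑ m ∈ Finset.Ico M (N + 1), (N.choose m : ℝ) / 2 ^ N * (ε / 2) := by
          refine Finset.sum_le_sum fun m hm => ?_
          gcongr
          exact (hM m (Finset.mem_Ico.1 hm).1).le
      _ ≤ ∑ m ∈ Finset.range (N + 1), (N.choose m : ℝ) / 2 ^ N * (ε / 2) := by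
          refine Finset.sum_le_sum_of_subset_of_nonneg (fun m hm => ?_) fun m _ _ => by positivity
          exact Finset.mem_range.2 (Finset.mem_Ico.1 hm).2
      _ = ε / 2 := by rw [← Finset.sum_mul, hw, one_mul]
  rw [Real.dist_eq, hdiff]
  calc |∑ m ∈ Finset.range (N + 1), (N.choose m : ℝ) / 2 ^ N * (v m - L)|
      ≤ ∑ m ∈ Finset.range (N + 1), (N.choose m : ℝ) / 2 ^ N * |v m - L| := by
        refine (Finset.abs_sum_le_sum_abs _ _).trans_eq (Finset.sum_congr rfl fun m _ => ?_)
        rw [abs_mul, abs_of_nonneg (by positivity)]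
    _ < ε := by
        rw [← Finset.sum_range_add_sum_Ico _ hMN]
        linarith [hN₀ N ((le_max_left _ _).trans hN)]

/-- Pascal's rule, summed against a sequence. -/
lemma sum_choose_succ (f : ℕ → ℝ) (N : ℕ) :
    ∑ m ∈ Finset.range (N + 2), ((N + 1).choose m : ℝ) * f m
      = ∑ m ∈ Finset.range (N + 1), (N.choose m : ℝ) * (f m + f (m + 1)) := by
  rw [Finset.sum_choose_succ_mul (fun i _ => f i) N, ← Finset.sum_add_distrib]
  exact Finset.sum_congr rfl fun m _ => by ring

/-- Euler's transformation: the partial sums of the transformed series are the binomial means of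
those of the alternating series. -/
lemma sum_eq_binomialMean (N : ℕ) :
    ∑ n ∈ Finset.range (N + 1), (1 : ℝ) / 2 ^ n *
        ∑ k ∈ Finset.range (n + 1), (-1 : ℝ) ^ (k + 1) * (n.choose k : ℝ) * log ((k : ℝ) + 1)
      = binomialMean wallisLog N := by
  induction N with
  | zero => simp [binomialMean, wallisLog]
  | succ N ih =>
    have hE : ∑ k ∈ Finset.range (N + 2),
          (-1 : ℝ) ^ (k + 1) * ((N + 1).choose k : ℝ) * log ((k : ℝ) + 1)
        = ∑ m ∈ Finset.range (N + 1),
          (N.choose m : ℝ) * (wallisLog (m + 1) - wallisLog m) := by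
      have h := sum_choose_succ (fun k => (-1 : ℝ) ^ (k + 1) * log ((k : ℝ) + 1)) N
      calc _ = _ := Finset.sum_congr rfl fun k _ => by ring
        _ = _ := h
        _ = _ := Finset.sum_congr rfl fun m _ => by
          rw [wallisLog_succ]
          push_cast
          rw [show (m + 1 + 1 : ℝ) = m + 2 by ring]
          ring
    rw [Finset.sum_range_succ, ih, hE, binomialMean, binomialMean, sum_choose_succ]
    simp only [mul_add, mul_sub, Finset.sum_add_distrib, Finset.sum_sub_distrib]
    field_simp
    ring

/-- `π/2 = ∏_{n=0}^∞ ( ∏_{k=0}^n (k+1)^{(-1)^{k+1} C(n,k)} )^{1/2ⁿ}`: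
the partial products converge to `π/2`. -/
theorem tendsto_prod_rpow_pi_div_two :
    Tendsto (fun N : ℕ => ∏ n ∈ Finset.range (N + 1),
        (∏ k ∈ Finset.range (n + 1),
          ((k : ℝ) + 1) ^ ((-1 : ℝ) ^ (k + 1) * (n.choose k : ℝ))) ^ ((1 : ℝ) / 2 ^ n))
      atTop (nhds (π / 2)) := by
  have h := (tendsto_binomialMean tendsto_wallisLog).rexp
  rw [exp_log (by positivity)] at h
  refine h.congr fun N => ?_
  rw [← sum_eq_binomialMean, exp_sum]
  refine Finset.prod_congr rfl fun n _ => ?_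
  rw [mul_comm, exp_mul, exp_sum]
  congr 1
  refine Finset.prod_congr rfl fun k _ => ?_
  rw [rpow_def_of_pos (by positivity), mul_comm]
end

section
/- For every real number a with 0 < a ≤ 1, the derivative at s = 0 of the Hurwitz zeta function s ↦ ζ(s, a) equals log(Γ(a)/√(2π)); that is, ∂Φ/∂s(1, 0, a) = log(Γ(a)/√(2π)), where Φ(1, s, a) = ζ(s, a). -/
/-!
Since `ζ(s, 1) = ζ(s)` and `ζ'(0) = -log(2π)/2` are in Mathlib, it suffices to show that
`ζ(s, a) - ζ(s)` has derivative `log Γ(a)` at `s = 0`. For `re s > 1` this difference is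
`∑ ((n + a)^(-s) - (n + 1)^(-s))`, and subtracting the leading part `s (1 - a) (n + 1)^(-s-1)` of each
term leaves terms of size `O((n + 1)^(-re s - 2))` (`norm_regTerm_le`, from a Taylor estimate). The
regularised series is therefore holomorphic near `0`, and by the identity theorem its sum is
`ζ(s, a) - ζ(s) - (1 - a) s ζ(s + 1)` there (`tsum_regTerm_eqOn`).

Differentiating termwise at `0` gives
`∑ (log (n + 1) - log (n + a) - (1 - a)/(n + 1)) = log Γ(a) - (1 - a) γ`
by Euler's limit formula for `Γ` and the definition of `γ` (`tendsto_sum_deriv_regTerm`). As `s ζ(s + 1)`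
has derivative `γ` at `0`, the terms in `γ` cancel.
-/

open Real HurwitzZeta

open Filter Topology

/-- Second-order Taylor bound for `t ^ (-s)` at `t = 1`, uniform in `t ∈ [a, 1]` and in `‖s‖ < 3`:
the second derivative `s (s + 1) t ^ (-s - 2)` is at most `3 * 4 * a ^ (-5)`
in norm. -/
lemma norm_cpow_neg_sub_le {a t : ℝ} (ha : 0 < a) (hat : a ≤ t) (ht : t ≤ 1) {s : ℂ}
    (hs3 : ‖s‖ < 3) :
    ‖(t : ℂ) ^ (-s) - 1 - s * (1 - t)‖ ≤ 12 * a ^ (-5 : ℝ) * (1 - t) ^ 2 := by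
  have hre : s.re ≤ 3 := (Complex.re_le_norm s).trans hs3.le
  have hd (w : ℂ) (x : ℝ) (hx : 0 < x) :
      HasDerivAt (fun y : ℝ ↦ (y : ℂ) ^ w) (w * (x : ℂ) ^ (w - 1)) x := by
    have := ((hasDerivAt_id (x : ℂ)).cpow_const (c := w) (by simp [hx])).comp_ofReal
    simpa using this
  -- The mean value inequality is applied twice: here to `x ^ (-s - 1)`, below to the remainder.
  have h1 (x : ℝ) (hax : a ≤ x) (hx1 : x ≤ 1) :
      ‖(x : ℂ) ^ (-s - 1) - 1‖ ≤ 4 * a ^ (-5 : ℝ) * (1 - x) := by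
    have := (convex_Icc x 1).norm_image_sub_le_of_norm_hasDerivWithin_le
      (f := fun y : ℝ ↦ (y : ℂ) ^ (-s - 1)) (C := 4 * a ^ (-5 : ℝ))
      (fun y hy ↦ (hd (-s - 1) y (by linarith [hy.1])).hasDerivWithinAt)
      (fun y hy ↦ ?_) (⟨hx1, le_rfl⟩ : (1 : ℝ) ∈ Set.Icc x 1) ⟨le_rfl, hx1⟩
    · simpa [abs_sub_comm x 1, abs_of_nonneg (sub_nonneg.2 hx1)] using this
    · have hy0 : 0 < y := by linarith [hy.1]
      rw [norm_mul, Complex.norm_cpow_eq_rpow_re_of_pos hy0]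
      gcongr
      · calc ‖-s - 1‖ ≤ ‖-s‖ + ‖(1 : ℂ)‖ := norm_sub_le _ _
          _ ≤ 4 := by rw [norm_neg, norm_one]; linarith
      · calc y ^ (-s - 1 - 1).re ≤ y ^ (-5 : ℝ) :=
              Real.rpow_le_rpow_of_exponent_ge hy0 hy.2 (by simp; linarith)
          _ ≤ a ^ (-5 : ℝ) :=
              Real.rpow_le_rpow_of_nonpos ha (hax.trans hy.1) (by norm_num)
  have := (convex_Icc t 1).norm_image_sub_le_of_norm_hasDerivWithin_le
      (f := fun y : ℝ ↦ (y : ℂ) ^ (-s) - 1 - s * (1 - y))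
      (f' := fun y : ℝ ↦ -s * ((y : ℂ) ^ (-s - 1) - 1)) (C := 12 * a ^ (-5 : ℝ) * (1 - t))
      (fun y hy ↦ ?_) (fun y hy ↦ ?_) (⟨ht, le_rfl⟩ : (1 : ℝ) ∈ Set.Icc t 1) ⟨le_rfl, ht⟩
  · refine (Eq.trans_le ?_ this).trans_eq ?_
    · simp
    · rw [Real.norm_eq_abs, abs_sub_comm, abs_of_nonneg (sub_nonneg.2 ht)]; ring
  · have hy0 : 0 < y := by linarith [hy.1]
    have h2 := ((hd (-s) y hy0).sub_const 1).sub
      ((((hasDerivAt_id (y : ℂ)).comp_ofReal).const_sub 1).const_mul s)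
    refine HasDerivAt.hasDerivWithinAt ?_
    convert! h2 using 1
    ring
  · rw [norm_mul, norm_neg]
    calc ‖s‖ * ‖(y : ℂ) ^ (-s - 1) - 1‖ ≤ 3 * (4 * a ^ (-5 : ℝ) * (1 - y)) := by
          gcongr
          exact h1 y (hat.trans hy.1) hy.2
      _ ≤ 3 * (4 * a ^ (-5 : ℝ) * (1 - t)) := by gcongr; exact hy.1
      _ = _ := by ring

/-- The difference `(n + a) ^ (-s) - (n + 1) ^ (-s)` minus its leading part
`s (1 - a) (n + 1) ^ (-s - 1)`, which makes the series converge for `re s > -1`. It is written in the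
factored form `(n + 1) ^ (-s) (t ^ (-s) - 1 - s (1 - t))` with `t = (n + a) / (n + 1) ∈ [a, 1]`;
see `regTerm_eq` for the expanded form. -/
noncomputable def regTerm (a : ℝ) (n : ℕ) (s : ℂ) : ℂ :=
  ((n + 1 : ℝ) : ℂ) ^ (-s) *
    ((((n + a) / (n + 1) : ℝ) : ℂ) ^ (-s) - 1 - s * (1 - ((n + a) / (n + 1) : ℝ)))

/-- A convex open region containing `0` and meeting the half-plane `1 < re s`, on which the series of
`regTerm`s converges uniformly. Boundedness keeps the Taylor constant uniform. -/
def strip : Set ℂ := {s : ℂ | -(1 / 2) < s.re} ∩ Metric.ball 0 3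

lemma isOpen_strip : IsOpen strip :=
  (isOpen_lt continuous_const Complex.continuous_re).inter Metric.isOpen_ball

lemma isPreconnected_strip : IsPreconnected strip :=
  ((convex_halfSpace_re_gt _).inter (convex_ball _ _)).isPreconnected

lemma norm_regTerm_le {a : ℝ} (ha : 0 < a) (ha' : a ≤ 1) (n : ℕ) {s : ℂ} (hs : s ∈ strip) :
    ‖regTerm a n s‖ ≤ 12 * a ^ (-5 : ℝ) * ((n + 1 : ℕ) : ℝ) ^ (-(3 / 2) : ℝ) := by
  have hn : (0 : ℝ) < n + 1 := by positivity
  have hs1 : -(1 / 2) < s.re := hs.1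
  have h := norm_cpow_neg_sub_le (t := (n + a) / (n + 1)) ha
    (by rw [le_div_iff₀ hn]; nlinarith [n.cast_nonneg (α := ℝ)])
    (by rw [div_le_one hn]; linarith) (by simpa using hs.2)
  have hsub : 1 - (n + a) / (n + 1) = (1 - a) / (n + 1 : ℝ) := by field_simp; ring
  rw [regTerm, norm_mul, Complex.norm_cpow_eq_rpow_re_of_pos hn]
  calc (n + 1 : ℝ) ^ (-s).re * _
      ≤ (n + 1 : ℝ) ^ (1 / 2 : ℝ) * (12 * a ^ (-5 : ℝ) * (1 - (n + a) / (n + 1)) ^ 2) := by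
        gcongr
        · linarith
        · simp at *; linarith
    _ ≤ (n + 1 : ℝ) ^ (1 / 2 : ℝ) * (12 * a ^ (-5 : ℝ) * (n + 1 : ℝ) ^ (-2 : ℝ)) := by
        gcongr
        rw [hsub, Real.rpow_neg hn.le, Real.rpow_two, ← inv_pow, div_eq_mul_inv]
        have : 0 ≤ 1 - a := by linarith
        gcongr
        · exact mul_le_of_le_one_left (by positivity) (by linarith)
    _ = 12 * a ^ (-5 : ℝ) * ((n + 1 : ℝ) ^ (1 / 2 : ℝ) * (n + 1 : ℝ) ^ (-2 : ℝ)) := by ring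
    _ = _ := by
        rw [← Real.rpow_add hn]; push_cast; norm_num

lemma summable_bound (a : ℝ) :
    Summable fun n : ℕ ↦ 12 * a ^ (-5 : ℝ) * ((n + 1 : ℕ) : ℝ) ^ (-(3 / 2) : ℝ) := by
  refine Summable.mul_left _ ?_
  exact (summable_nat_add_iff 1 (f := fun n : ℕ ↦ (n : ℝ) ^ (-(3 / 2) : ℝ))).2
    (Real.summable_nat_rpow.2 (by norm_num))

lemma differentiableAt_regTerm {a : ℝ} (ha : 0 < a) (n : ℕ) (s : ℂ) :
    DifferentiableAt ℂ (regTerm a n) s := by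
  have hn : ((n + 1 : ℝ) : ℂ) ≠ 0 := by exact_mod_cast (by positivity : (n + 1 : ℝ) ≠ 0)
  have hy : (((n + a) / (n + 1) : ℝ) : ℂ) ≠ 0 := by
    exact_mod_cast (by positivity : ((n + a) / (n + 1) : ℝ) ≠ 0)
  unfold regTerm
  refine .mul (.const_cpow (by fun_prop) (.inl hn)) ?_
  exact ((DifferentiableAt.const_cpow (by fun_prop) (.inl hy)).sub_const _).sub (by fun_prop)

lemma deriv_regTerm_zero {a : ℝ} (ha : 0 < a) (n : ℕ) :
    deriv (regTerm a n) 0 =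
      ((Real.log (n + 1) - Real.log (a + n) - (1 - a) * (n + 1 : ℝ)⁻¹ : ℝ) : ℂ) := by
  have hn' : (0 : ℝ) < n + 1 := by positivity
  have hn : ((n + 1 : ℝ) : ℂ) ≠ 0 := by exact_mod_cast hn'.ne'
  have hy' : (0 : ℝ) < (n + a) / (n + 1) := by positivity
  have hy : (((n + a) / (n + 1) : ℝ) : ℂ) ≠ 0 := by exact_mod_cast hy'.ne'
  have h := (((hasDerivAt_id (0 : ℂ)).neg).const_cpow (.inl hn)).mul
    (((((hasDerivAt_id (0 : ℂ)).neg).const_cpow (.inl hy)).sub_const 1).sub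
      ((hasDerivAt_id (0 : ℂ)).mul_const (1 - (((n + a) / (n + 1) : ℝ) : ℂ))))
  have h2 : HasDerivAt (regTerm a n) _ 0 := h
  rw [h2.deriv]
  have : Real.log ((n + a) / (n + 1)) = Real.log (a + n) - Real.log (n + 1) := by
    rw [Real.log_div (by positivity) hn'.ne', add_comm]
  have h3 : ((1 - a) * (n + 1 : ℝ)⁻¹ : ℝ) = 1 - (n + a) / (n + 1) := by field_simp; ring
  rw [h3, show Real.log (n + 1) - Real.log (a + n) = -Real.log ((n + a) / (n + 1)) by linarith]
  rw [Complex.ofReal_sub, Complex.ofReal_neg, Complex.ofReal_log hy'.le]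
  simp

/-- The partial sums are, up to `log (N + a) - log N → 0`, Euler's sequence for `log Γ(a)` minus
`1 - a` times the sequence `H_N - log N` defining Euler's constant. -/
lemma tendsto_sum_deriv_regTerm {a : ℝ} (ha : 0 < a) :
    Tendsto (fun N : ℕ ↦ ∑ n ∈ Finset.range N,
      (Real.log (n + 1) - Real.log (a + n) - (1 - a) * (n + 1 : ℝ)⁻¹)) atTop
      (𝓝 (Real.log (Real.Gamma a) - (1 - a) * Real.eulerMascheroniConstant)) := by
  have h1 := Real.BohrMollerup.tendsto_log_gamma ha
  have h2 := Real.tendsto_harmonic_sub_log.const_mul (1 - a)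
  have h3 : Tendsto (fun N : ℕ ↦ Real.log (N + a) - Real.log N) atTop (𝓝 0) :=
    (Real.tendsto_log_comp_add_sub_log a).comp tendsto_natCast_atTop_atTop
  have h := (h1.sub h2).add h3
  rw [add_zero] at h
  refine h.congr fun N ↦ ?_
  have hfac : Real.log (N.factorial) = ∑ n ∈ Finset.range N, Real.log (n + 1) := by
    rw [← Finset.prod_range_add_one_eq_factorial, Nat.cast_prod, Real.log_prod]
    · simp
    · intro i _; positivity
  have hharm : ((harmonic N : ℚ) : ℝ) = ∑ n ∈ Finset.range N, (n + 1 : ℝ)⁻¹ := by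
    simp [harmonic]
  rw [Real.BohrMollerup.logGammaSeq, hfac, hharm, Finset.sum_range_succ, Finset.sum_sub_distrib,
    Finset.sum_sub_distrib, ← Finset.mul_sum, add_comm (N : ℝ) a]
  ring

lemma regTerm_eq {a : ℝ} (ha : 0 < a) (n : ℕ) (s : ℂ) :
    regTerm a n s = 1 / (n + a : ℂ) ^ s - 1 / (n + 1 : ℂ) ^ s
      - s * (1 - a) * (1 / (n + 1 : ℂ) ^ (s + 1)) := by
  have hn' : (0 : ℝ) < n + 1 := by positivity
  have hn : (n + 1 : ℂ) ≠ 0 := by exact_mod_cast hn'.ne'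
  have hy' : (0 : ℝ) < (n + a) / (n + 1) := by positivity
  have hmul : (n + a : ℂ) = ((n + 1 : ℝ) : ℂ) * (((n + a) / (n + 1) : ℝ) : ℂ) := by
    push_cast; field_simp
  have h1 : 1 / (n + a : ℂ) ^ s =
      ((n + 1 : ℝ) : ℂ) ^ (-s) * (((n + a) / (n + 1) : ℝ) : ℂ) ^ (-s) := by
    rw [one_div, ← Complex.cpow_neg, hmul, Complex.mul_cpow_ofReal_nonneg hn'.le hy'.le]
  rw [h1, regTerm, Complex.cpow_add _ _ hn, Complex.cpow_one, Complex.cpow_neg ((n + 1 : ℝ) : ℂ) s]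
  push_cast
  have : (n + 1 : ℂ) ^ s ≠ 0 := by simp [Complex.cpow_eq_zero_iff, hn]
  field_simp
  ring

/-- Here `riemannZeta₁ (s + 1)` is the entire function extending `s ζ(s + 1)`. -/
lemma tsum_regTerm {a : ℝ} (ha : 0 < a) (ha' : a ≤ 1) {s : ℂ} (hs : 1 < s.re) :
    ∑' n, regTerm a n s =
      hurwitzZeta (a : UnitAddCircle) s - hurwitzZeta 0 s - (1 - a) * riemannZeta₁ (s + 1) := by
  have h1 := hasSum_hurwitzZeta_of_one_lt_re (a := a) ⟨ha.le, ha'⟩ hs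
  have h2 := hasSum_hurwitzZeta_of_one_lt_re (a := 1) ⟨zero_le_one, le_rfl⟩ hs
  have h3 := hasSum_hurwitzZeta_of_one_lt_re (a := 1) ⟨zero_le_one, le_rfl⟩
    (s := s + 1) (by simp; linarith)
  have hs0 : s ≠ 0 := by rintro rfl; simp at hs; linarith
  have hc : ((1 : ℝ) : UnitAddCircle) = 0 := AddCircle.coe_period 1
  rw [hc] at h2 h3
  have h := (h1.sub h2).sub (h3.mul_left (s * (1 - a)))
  refine Eq.trans (tsum_congr fun n ↦ ?_) (h.tsum_eq.trans ?_)
  · rw [regTerm_eq ha]; simp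
  · rw [hurwitzZeta_zero, riemannZeta_eq_inv_sub_mul (s := s + 1) (by simpa using hs0)]
    rw [add_sub_cancel_right]
    field_simp

/-- Analytic continuation of `tsum_regTerm` to a neighbourhood of `0`. -/
lemma tsum_regTerm_eqOn {a : ℝ} (ha : 0 < a) (ha' : a ≤ 1) :
    Set.EqOn (fun s ↦ ∑' n, regTerm a n s) (fun s ↦
      hurwitzZeta (a : UnitAddCircle) s - hurwitzZeta 0 s - (1 - a) * riemannZeta₁ (s + 1))
      strip := by
  have hF : DifferentiableOn ℂ (fun s ↦ ∑' n, regTerm a n s) strip :=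
    Complex.differentiableOn_tsum_of_summable_norm (summable_bound a)
      (fun n s _ ↦ (differentiableAt_regTerm ha n s).differentiableWithinAt) isOpen_strip
      (fun n s hs ↦ norm_regTerm_le ha ha' n hs)
  have hG : Differentiable ℂ (fun s ↦
      hurwitzZeta (a : UnitAddCircle) s - hurwitzZeta 0 s - (1 - a) * riemannZeta₁ (s + 1)) :=
    (differentiable_hurwitzZeta_sub_hurwitzZeta _ _).sub (by fun_prop)
  refine (hF.analyticOnNhd isOpen_strip).eqOn_of_preconnected_of_eventuallyEq
    (hG.differentiableOn.analyticOnNhd isOpen_strip) isPreconnected_strip (z₀ := 2) ?_ ?_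
  · constructor <;> norm_num [Metric.mem_ball]
  · filter_upwards [(isOpen_lt continuous_const Complex.continuous_re).mem_nhds
      (show (1 : ℝ) < (2 : ℂ).re by simp)] with s hs using tsum_regTerm ha ha' hs

/-- Termwise differentiation at `s = 0` of the regularised series; the Euler constants coming from
`riemannZeta₁` and from the sum of the derivatives cancel. -/
lemma deriv_hurwitzZeta_sub_zero {a : ℝ} (ha : 0 < a) (ha' : a ≤ 1) :
    deriv (fun s ↦ hurwitzZeta (a : UnitAddCircle) s - hurwitzZeta 0 s) 0 =
      Real.log (Real.Gamma a) := by
  have h0 : (0 : ℂ) ∈ strip := by constructor <;> simp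
  have hsum := Complex.hasSum_deriv_of_summable_norm (summable_bound a)
      (fun n s _ ↦ (differentiableAt_regTerm ha n s).differentiableWithinAt) isOpen_strip
      (fun n s hs ↦ norm_regTerm_le ha ha' n hs) h0
  rw [((tsum_regTerm_eqOn ha ha').eventuallyEq_of_mem (isOpen_strip.mem_nhds h0)).deriv_eq] at hsum
  have hz : HasDerivAt (fun s : ℂ ↦ (1 - a) * riemannZeta₁ (s + 1))
      ((1 - a) * Real.eulerMascheroniConstant) 0 := by
    have h := (differentiable_riemannZeta₁ (0 + 1)).hasDerivAt.comp_add_const 0 1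
    rw [zero_add, deriv_riemannZeta₁_one] at h
    exact h.const_mul _
  have hlim := (Complex.continuous_ofReal.tendsto _).comp (tendsto_sum_deriv_regTerm ha)
  have hu := tendsto_nhds_unique hsum.tendsto_sum_nat (hlim.congr fun N ↦ by
    simp only [Function.comp_apply, Complex.ofReal_sum, deriv_regTerm_zero ha])
  rw [deriv_fun_sub (differentiable_hurwitzZeta_sub_hurwitzZeta _ _ 0) hz.differentiableAt,
    hz.deriv] at hu
  push_cast at hu
  linear_combination hu

/-- `∂Φ/∂s(1, 0, a) = ∂/∂s ζ(s, a)|_{s=0} = log(Γ(a)/√(2π))` for `0 < a ≤ 1`. -/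
theorem deriv_hurwitzZeta_zero (a : ℝ) (ha : 0 < a) (ha' : a ≤ 1) :
    deriv (fun s : ℂ => hurwitzZeta (a : UnitAddCircle) s) 0 =
      Real.log (Real.Gamma a / Real.sqrt (2 * π)) := by
  have h := deriv_hurwitzZeta_sub_zero ha ha'
  rw [deriv_fun_sub (differentiableAt_hurwitzZeta _ (by simp))
    (differentiableAt_hurwitzZeta _ (by simp)), hurwitzZeta_zero, deriv_riemannZeta_zero] at h
  have h2 : Complex.log (2 * π) = (Real.log (2 * π) : ℂ) := by
    rw [Complex.ofReal_log (by positivity)]; push_cast; rfl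
  rw [h2] at h
  rw [Real.log_div (Real.Gamma_pos_of_pos ha).ne' (by positivity), Real.log_sqrt (by positivity)]
  push_cast
  linear_combination h
end

section
/- For every real number u with 0 < u ≤ 1, the derivative at s = 0 of the function s ↦ 2^{−s} · (ζ(s, u/2) − ζ(s, (u+1)/2)) equals log( Γ(u/2) / (Γ((u+1)/2) · √2) ); that is, ∂Φ/∂s(−1, 0, u) = log( Γ(u/2) / (Γ((u+1)/2) √2) ). -/
open Real HurwitzZeta

/-!
Put `a = u / 2`, `b = a + 1 / 2` and `F s = ζ(s, a) - ζ(s, b)`, an entire function. For `Re s > 1`,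
shifting the index in one of two copies of the series of `ζ(s, a)` gives
`2 F s = a ^ (-s) + ∑ T n s`, where
`T n s = (n + a) ^ (-s) - 2 (n + a + 1/2) ^ (-s) + (n + a + 1) ^ (-s)`
is a second difference of `x ↦ x ^ (-s)`. Two applications of the mean value inequality bound it by
`‖s‖ ‖s + 1‖ (n + a) ^ (-Re s - 2) / 4`, so the series converges locally uniformly for `Re s > -1`
and the identity persists near `s = 0` by analytic continuation (`two_mul_zetaDiff_eq`).

At `s = 0` every `T n` vanishes, so `F 0 = 1 / 2`. Termwise differentiation expresses `2 F' 0` as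
the limit of `2 ∑_{n < N} (log (n + b) - log (n + a)) - log (N + a)`, and Euler's limit formula
`Real.BohrMollerup.tendsto_log_gamma` evaluates it as `2 (log Γ(a) - log Γ(b))`. The factor
`2 ^ (-s)` contributes `-log 2 * F 0 = -log √2`.
-/

/-- Mean value inequality for `y ↦ y ^ (-w)` on `[x, x + h]`; when `-1 ≤ Re w` the derivative is
largest in norm at the left endpoint. -/
lemma norm_cpow_sub_le {x h : ℝ} (hx : 0 < x) (hh : 0 ≤ h) {w : ℂ} (hw : 0 ≤ w.re + 1) :
    ‖((x + h : ℝ) : ℂ) ^ (-w) - (x : ℂ) ^ (-w)‖ ≤ ‖w‖ * x ^ (-w.re - 1) * h := by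
  have key := Convex.norm_image_sub_le_of_norm_hasDerivWithin_le (𝕜 := ℝ)
    (f := fun y : ℝ => (y : ℂ) ^ (-w)) (f' := fun y : ℝ => -w * (y : ℂ) ^ (-w - 1))
    (s := Set.Icc x (x + h)) (C := ‖w‖ * x ^ (-w.re - 1)) (x := x) (y := x + h)
    (fun y hy => by
      have hy0 : 0 < y := hx.trans_le hy.1
      have := ((hasDerivAt_id (y : ℂ)).cpow_const (c := -w)
        (Complex.ofReal_mem_slitPlane.2 hy0)).comp_ofReal
      simpa using this.hasDerivWithinAt)
    (fun y hy => by
      have hy0 : 0 < y := hx.trans_le hy.1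
      rw [norm_mul, norm_neg, Complex.norm_cpow_eq_rpow_re_of_pos hy0]
      refine mul_le_mul_of_nonneg_left ?_ (norm_nonneg _)
      simpa using Real.rpow_le_rpow_of_nonpos hx hy.1 (by linarith : -w.re - 1 ≤ 0))
    (convex_Icc _ _) ⟨le_rfl, by linarith⟩ ⟨by linarith, le_rfl⟩
  simpa [abs_of_nonneg hh] using key

/-- The second difference `(n+a)^(-s) - 2 (n+a+1/2)^(-s) + (n+a+1)^(-s)`. -/
noncomputable def secondDiff (a : ℝ) (n : ℕ) (s : ℂ) : ℂ :=
  ((n + a : ℝ) : ℂ) ^ (-s) - 2 * ((n + a + 1 / 2 : ℝ) : ℂ) ^ (-s) + ((n + a + 1 : ℝ) : ℂ) ^ (-s)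

lemma norm_secondDiff_le_rpow {a : ℝ} (ha : 0 < a) (n : ℕ) {s : ℂ} (hs : 0 ≤ s.re + 1) :
    ‖secondDiff a n s‖ ≤ ‖s‖ * ‖s + 1‖ * (n + a) ^ (-s.re - 2) / 4 := by
  have hx : 0 < (n : ℝ) + a := by positivity
  set x : ℝ := n + a with hxd
  have key := Convex.norm_image_sub_le_of_norm_hasDerivWithin_le (𝕜 := ℝ)
    (f := fun y : ℝ => ((y + 1 / 2 : ℝ) : ℂ) ^ (-s) - (y : ℂ) ^ (-s))
    (f' := fun y : ℝ => -s * (((y + 1 / 2 : ℝ) : ℂ) ^ (-(s + 1)) - (y : ℂ) ^ (-(s + 1))))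
    (s := Set.Icc x (x + 1 / 2)) (C := ‖s‖ * (‖s + 1‖ * x ^ (-s.re - 2) * (1 / 2)))
    (x := x) (y := x + 1 / 2)
    (fun y hy => by
      have hy0 : 0 < y := hx.trans_le hy.1
      have h1 := ((hasDerivAt_id (y : ℂ)).cpow_const (c := -s)
        (Complex.ofReal_mem_slitPlane.2 hy0)).comp_ofReal
      have h2 := ((hasDerivAt_id ((y + 1 / 2 : ℝ) : ℂ)).cpow_const (c := -s)
        (Complex.ofReal_mem_slitPlane.2 (by linarith : 0 < y + 1 / 2))).comp_ofReal
      have h3 := HasDerivAt.comp_add_const y (1 / 2) h2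
      refine ((h3.sub h1).congr_deriv ?_).hasDerivWithinAt
      have e : -(s + 1) = -s - 1 := by ring
      simp only [id, e]
      ring)
    (fun y hy => by
      have hy0 : 0 < y := hx.trans_le hy.1
      rw [norm_mul, norm_neg]
      refine mul_le_mul_of_nonneg_left ?_ (norm_nonneg _)
      have hre : (s + 1).re = s.re + 1 := by simp
      refine (norm_cpow_sub_le hy0 (by norm_num) (by rw [hre]; linarith)).trans ?_
      have e : -(s + 1).re - 1 = -s.re - 2 := by rw [hre]; ring
      rw [e]
      gcongr ?_ * ?_ * _
      exact Real.rpow_le_rpow_of_nonpos hx hy.1 (by linarith))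
    (convex_Icc _ _) ⟨le_rfl, by linarith⟩ ⟨by linarith, le_rfl⟩
  have e : secondDiff a n s = (((x + 1 / 2 + 1 / 2 : ℝ) : ℂ) ^ (-s) - ((x + 1 / 2 : ℝ) : ℂ) ^ (-s))
      - (((x + 1 / 2 : ℝ) : ℂ) ^ (-s) - (x : ℂ) ^ (-s)) := by
    have : x + 1 / 2 + 1 / 2 = x + 1 := by ring
    rw [this, secondDiff]
    ring
  rw [e]
  refine key.trans (le_of_eq ?_)
  have : ‖x + 1 / 2 - x‖ = 1 / 2 := by norm_num
  rw [this]
  ring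

/-- A bounded convex neighbourhood of `0` that meets the half-plane `Re s > 1`. -/
def contDomain : Set ℂ := Metric.ball 0 3 ∩ {s | -1 / 2 < s.re}

lemma isOpen_contDomain : IsOpen contDomain :=
  Metric.isOpen_ball.inter (isOpen_lt continuous_const Complex.continuous_re)

lemma isPreconnected_contDomain : IsPreconnected contDomain :=
  ((convex_ball 0 3).inter (convex_halfSpace_re_gt _)).isPreconnected

lemma zero_mem_contDomain : (0 : ℂ) ∈ contDomain := by
  constructor
  · simp
  · norm_num [Set.mem_ofPred_eq]

/-- On `contDomain`, `‖s‖ < 3`, `‖s + 1‖ < 4`, and `n + a ≥ a (n + 1)`, where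
`3 / 2 < Re s + 2 < 5`. -/
lemma norm_secondDiff_le {a : ℝ} (ha : 0 < a) (ha1 : a ≤ 1) (n : ℕ) {s : ℂ}
    (hs : s ∈ contDomain) :
    ‖secondDiff a n s‖ ≤ 3 * a ^ (-5 : ℝ) * ((n : ℝ) + 1) ^ (-(3 / 2) : ℝ) := by
  obtain ⟨h1, h2⟩ := hs
  have h1 : ‖s‖ < 3 := by simpa using h1
  have h2 : -1 / 2 < s.re := h2
  have h3 : ‖s + 1‖ ≤ 4 := by
    have := norm_add_le s 1
    rw [norm_one] at this
    linarith
  have h4 : s.re < 3 := (Complex.re_le_norm s).trans_lt h1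
  have hn : (0 : ℝ) ≤ n := n.cast_nonneg
  have h5 : ((n : ℝ) + a) ^ (-s.re - 2) ≤ a ^ (-5 : ℝ) * ((n : ℝ) + 1) ^ (-(3 / 2) : ℝ) := by
    calc ((n : ℝ) + a) ^ (-s.re - 2) ≤ (a * (n + 1)) ^ (-s.re - 2) :=
          Real.rpow_le_rpow_of_nonpos (by positivity) (by nlinarith) (by linarith)
      _ = a ^ (-s.re - 2) * ((n : ℝ) + 1) ^ (-s.re - 2) :=
          Real.mul_rpow ha.le (by positivity)
      _ ≤ _ := by
          gcongr ?_ * ?_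
          · exact Real.rpow_le_rpow_of_exponent_ge ha ha1 (by linarith)
          · exact Real.rpow_le_rpow_of_exponent_le (by linarith) (by linarith)
  refine (norm_secondDiff_le_rpow ha n (by linarith)).trans ?_
  have h6 : ‖s‖ * ‖s + 1‖ ≤ 3 * 4 := by gcongr
  have h7 : 0 ≤ ((n : ℝ) + a) ^ (-s.re - 2) := by positivity
  calc ‖s‖ * ‖s + 1‖ * ((n : ℝ) + a) ^ (-s.re - 2) / 4
      ≤ 3 * 4 * (a ^ (-5 : ℝ) * ((n : ℝ) + 1) ^ (-(3 / 2) : ℝ)) / 4 := by gcongr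
    _ = _ := by ring

lemma summable_secondDiff_bound (a : ℝ) :
    Summable fun n : ℕ => 3 * a ^ (-5 : ℝ) * ((n : ℝ) + 1) ^ (-(3 / 2) : ℝ) := by
  refine Summable.mul_left _ ?_
  have := (summable_nat_add_iff 1).2
    (Real.summable_nat_rpow.2 (by norm_num : (-(3 / 2) : ℝ) < -1))
  simpa using this

lemma hasDerivAt_cpow_neg {x : ℝ} (hx : 0 < x) (s : ℂ) :
    HasDerivAt (fun s : ℂ => (x : ℂ) ^ (-s)) (-((x : ℂ) ^ (-s) * Real.log x)) s := by
  have h := (hasDerivAt_neg s).const_cpow (c := (x : ℂ))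
    (Or.inl (Complex.ofReal_ne_zero.2 hx.ne'))
  rw [Complex.ofReal_log hx.le]
  simpa using h

lemma hasDerivAt_secondDiff {a : ℝ} (ha : 0 < a) (n : ℕ) (s : ℂ) :
    HasDerivAt (secondDiff a n)
      (-(((n + a : ℝ) : ℂ) ^ (-s) * Real.log (n + a))
        - 2 * (-(((n + a + 1 / 2 : ℝ) : ℂ) ^ (-s) * Real.log (n + a + 1 / 2)))
        + -(((n + a + 1 : ℝ) : ℂ) ^ (-s) * Real.log (n + a + 1))) s :=
  ((hasDerivAt_cpow_neg (by positivity) s).sub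
    ((hasDerivAt_cpow_neg (by positivity) s).const_mul 2)).add
    (hasDerivAt_cpow_neg (by positivity) s)

/-- For `Re s > 1` the series of second differences is `2 ζ(s, a) - 2 ζ(s, a + 1/2)` up to the
first term, which the shift of index drops. -/
lemma hasSum_secondDiff {a : ℝ} (ha : 0 < a) (ha1 : a ≤ 1 / 2) {s : ℂ} (hs : 1 < s.re) :
    HasSum (fun n => secondDiff a n s)
      (2 * (hurwitzZeta (a : UnitAddCircle) s -
        hurwitzZeta ((a + 1 / 2 : ℝ) : UnitAddCircle) s) - (a : ℂ) ^ (-s)) := by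
  have hA := hasSum_hurwitzZeta_of_one_lt_re (a := a) ⟨ha.le, by linarith⟩ hs
  have hB := hasSum_hurwitzZeta_of_one_lt_re (a := a + 1 / 2) ⟨by linarith, by linarith⟩ hs
  have hA' := (hasSum_nat_add_iff' 1).2 hA
  have h := (hA.sub (hB.mul_left 2)).add hA'
  have hf : ∀ n : ℕ, secondDiff a n s = 1 / ((n : ℂ) + a) ^ s -
      2 * (1 / ((n : ℂ) + (a + 1 / 2 : ℝ)) ^ s) + 1 / (((n + 1 : ℕ) : ℂ) + a) ^ s := fun n => by
    simp only [secondDiff, Complex.cpow_neg, one_div]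
    push_cast
    have e1 : (n : ℂ) + a + 1 = n + 1 + a := by ring
    have e2 : (n : ℂ) + a + 2⁻¹ = n + (a + 2⁻¹) := by ring
    simp only [e1, e2]
  have hv : 2 * (hurwitzZeta (a : UnitAddCircle) s -
        hurwitzZeta ((a + 1 / 2 : ℝ) : UnitAddCircle) s) - (a : ℂ) ^ (-s) =
      hurwitzZeta (a : UnitAddCircle) s - 2 * hurwitzZeta ((a + 1 / 2 : ℝ) : UnitAddCircle) s +
        (hurwitzZeta (a : UnitAddCircle) s -
          ∑ i ∈ Finset.range 1, 1 / ((i : ℂ) + a) ^ s) := by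
    rw [Finset.sum_range_one, Nat.cast_zero, zero_add, Complex.cpow_neg]
    ring
  rw [hv, funext hf]
  exact h

/-- The identity of `hasSum_secondDiff`, continued analytically to a neighbourhood of `0`. -/
lemma two_mul_zetaDiff_eq {a : ℝ} (ha : 0 < a) (ha1 : a ≤ 1 / 2) :
    Set.EqOn (fun s => 2 * (hurwitzZeta (a : UnitAddCircle) s -
        hurwitzZeta ((a + 1 / 2 : ℝ) : UnitAddCircle) s))
      (fun s => (a : ℂ) ^ (-s) + ∑' n, secondDiff a n s) contDomain := by
  have hF : DifferentiableOn ℂ (fun s => 2 * (hurwitzZeta (a : UnitAddCircle) s -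
        hurwitzZeta ((a + 1 / 2 : ℝ) : UnitAddCircle) s)) contDomain :=
    ((differentiable_hurwitzZeta_sub_hurwitzZeta _ _).const_mul 2).differentiableOn
  have hG : DifferentiableOn ℂ (fun s => (a : ℂ) ^ (-s) + ∑' n, secondDiff a n s) contDomain :=
    DifferentiableOn.add
      (fun s _ => (hasDerivAt_cpow_neg ha s).differentiableAt.differentiableWithinAt)
      (Complex.differentiableOn_tsum_of_summable_norm (summable_secondDiff_bound a)
        (fun n s _ => (hasDerivAt_secondDiff ha n s).differentiableAt.differentiableWithinAt)
        isOpen_contDomain (fun n s hs => norm_secondDiff_le ha (by linarith) n hs))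
  refine (hF.analyticOnNhd isOpen_contDomain).eqOn_of_preconnected_of_eventuallyEq
    (hG.analyticOnNhd isOpen_contDomain) isPreconnected_contDomain (z₀ := 2) ?_ ?_
  · constructor
    · norm_num
    · norm_num [Set.mem_ofPred_eq]
  · have : {s : ℂ | 1 < s.re} ∈ nhds (2 : ℂ) :=
      (isOpen_lt continuous_const Complex.continuous_re).mem_nhds (by norm_num [Set.mem_ofPred_eq])
    filter_upwards [this] with s hs
    rw [(hasSum_secondDiff ha ha1 hs).tsum_eq]
    ring

/-- Partial sums of the termwise derivatives at `s = 0`, in terms of Euler's approximations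
`logGammaSeq x N = x log N + log N! - ∑_{m ≤ N} log (x + m)` of `log Γ(x)`. -/
lemma sum_log_eq (a : ℝ) (N : ℕ) :
    ∑ n ∈ Finset.range (N + 1), (-Real.log (n + a) + 2 * Real.log (n + a + 1 / 2)
        - Real.log (n + a + 1)) =
      Real.log a + (2 * (BohrMollerup.logGammaSeq a N - BohrMollerup.logGammaSeq (a + 1 / 2) N)
        - (Real.log (N + (a + 1)) - Real.log N)) := by
  have h1 : ∑ n ∈ Finset.range (N + 1), Real.log ((n : ℝ) + a + 1) =
      ∑ n ∈ Finset.range (N + 1), Real.log (n + a) + Real.log (N + (a + 1)) - Real.log a := by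
    have h2 := Finset.sum_range_succ (fun n : ℕ => Real.log ((n : ℝ) + a)) (N + 1)
    have h3 := Finset.sum_range_succ' (fun n : ℕ => Real.log ((n : ℝ) + a)) (N + 1)
    push_cast at h2 h3
    have e : ∀ y : ℝ, y + 1 + a = y + a + 1 := fun y => by ring
    simp only [e, zero_add] at h2 h3
    rw [← add_assoc]
    linarith
  simp only [Finset.sum_sub_distrib, Finset.sum_add_distrib, Finset.sum_neg_distrib,
    ← Finset.mul_sum, h1, BohrMollerup.logGammaSeq]
  have e1 : ∀ m : ℕ, a + 1 / 2 + (m : ℝ) = m + a + 1 / 2 := fun y => by ring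
  have e2 : ∀ m : ℕ, a + (m : ℝ) = m + a := fun y => by ring
  simp only [e1, e2]
  ring

/-- `F 0 = 1 / 2` and `F' 0 = log Γ(a) - log Γ(a + 1/2)`. -/
lemma hasDerivAt_zetaDiff {a : ℝ} (ha : 0 < a) (ha1 : a ≤ 1 / 2) :
    (hurwitzZeta (a : UnitAddCircle) 0 - hurwitzZeta ((a + 1 / 2 : ℝ) : UnitAddCircle) 0
      = 1 / 2) ∧
    HasDerivAt (fun s => hurwitzZeta (a : UnitAddCircle) s -
        hurwitzZeta ((a + 1 / 2 : ℝ) : UnitAddCircle) s)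
      ((Real.log (Real.Gamma a) - Real.log (Real.Gamma (a + 1 / 2)) : ℝ) : ℂ) 0 := by
  have hEq := two_mul_zetaDiff_eq ha ha1
  constructor
  · have h0 := hEq zero_mem_contDomain
    have hT : ∀ n, secondDiff a n 0 = 0 := fun n => by simp [secondDiff]; norm_num
    simp only [hT, tsum_zero, neg_zero, Complex.cpow_zero, add_zero] at h0
    linear_combination h0 / 2
  · have hdF := (differentiable_hurwitzZeta_sub_hurwitzZeta (a : UnitAddCircle)
      ((a + 1 / 2 : ℝ) : UnitAddCircle) 0).hasDerivAt
    have hdiff : ∀ n : ℕ, DifferentiableOn ℂ (secondDiff a n) contDomain := fun n s _ =>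
      (hasDerivAt_secondDiff ha n s).differentiableAt.differentiableWithinAt
    have hG : DifferentiableAt ℂ (fun s => ∑' n, secondDiff a n s) 0 :=
      (Complex.differentiableOn_tsum_of_summable_norm (summable_secondDiff_bound a) hdiff
        isOpen_contDomain (fun n s hs => norm_secondDiff_le ha (by linarith) n hs)).differentiableAt
        (isOpen_contDomain.mem_nhds zero_mem_contDomain)
    have hsum := Complex.hasSum_deriv_of_summable_norm (summable_secondDiff_bound a) hdiff
      isOpen_contDomain (fun n s hs => norm_secondDiff_le ha (by linarith) n hs)
      zero_mem_contDomain
    have hderiv : ∀ n : ℕ, deriv (secondDiff a n) 0 =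
        ((-Real.log (n + a) + 2 * Real.log (n + a + 1 / 2) - Real.log (n + a + 1) : ℝ) : ℂ) := by
      intro n
      rw [(hasDerivAt_secondDiff ha n 0).deriv]
      simp only [neg_zero, Complex.cpow_zero, one_mul]
      push_cast
      ring
    simp only [hderiv] at hsum
    have hlim := (hsum.tendsto_sum_nat).comp (Filter.tendsto_add_atTop_nat 1)
    have hlim' : Filter.Tendsto (fun N : ℕ => ∑ n ∈ Finset.range (N + 1),
        (-Real.log (n + a) + 2 * Real.log (n + a + 1 / 2) - Real.log (n + a + 1))) Filter.atTop
        (nhds (Real.log a + (2 * (Real.log (Real.Gamma a) - Real.log (Real.Gamma (a + 1 / 2)))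
          - 0))) := by
      simp only [sum_log_eq]
      exact ((((BohrMollerup.tendsto_log_gamma ha).sub
        (BohrMollerup.tendsto_log_gamma (by linarith : 0 < a + 1 / 2))).const_mul 2).sub
        ((Real.tendsto_log_comp_add_sub_log (a + 1)).comp tendsto_natCast_atTop_atTop)).const_add _
    have hval := tendsto_nhds_unique hlim (by
      simpa [Function.comp_def] using (Complex.continuous_ofReal.tendsto _).comp hlim')
    have hEv : (fun s => 2 * (hurwitzZeta (a : UnitAddCircle) s -
        hurwitzZeta ((a + 1 / 2 : ℝ) : UnitAddCircle) s)) =ᶠ[nhds 0]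
        (fun s => (a : ℂ) ^ (-s) + ∑' n, secondDiff a n s) :=
      hEq.eventuallyEq_of_mem (isOpen_contDomain.mem_nhds zero_mem_contDomain)
    have hR := ((hasDerivAt_cpow_neg ha 0).add hG.hasDerivAt).congr_of_eventuallyEq hEv
    have huniq := (hdF.const_mul 2).unique hR
    rw [hval] at huniq
    refine hdF.congr_deriv ?_
    simp only [neg_zero, Complex.cpow_zero, one_mul] at huniq
    push_cast at huniq ⊢
    simp only [one_div] at huniq ⊢
    linear_combination huniq / 2

/-- `∂Φ/∂s(-1, 0, u) = log(Γ(u/2)/(Γ((u+1)/2)·√2))` for `0 < u ≤ 1`, where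
`Φ(-1, s, u) = 2^{-s}(ζ(s, u/2) - ζ(s, (u+1)/2))`. -/
theorem deriv_lerch_neg_one_zero (u : ℝ) (hu : 0 < u) (hu' : u ≤ 1) :
    deriv (fun s : ℂ => (2 : ℂ) ^ (-s) *
        (hurwitzZeta ((u / 2 : ℝ) : UnitAddCircle) s -
          hurwitzZeta (((u + 1) / 2 : ℝ) : UnitAddCircle) s)) 0 =
      Real.log (Real.Gamma (u / 2) / (Real.Gamma ((u + 1) / 2) * Real.sqrt 2)) := by
  have e : (u + 1) / 2 = u / 2 + 1 / 2 := by ring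
  obtain ⟨h0, h1⟩ := hasDerivAt_zetaDiff (a := u / 2) (by linarith) (by linarith)
  have h2 := hasDerivAt_cpow_neg (x := 2) (by norm_num) 0
  have hg1 : Real.Gamma (u / 2) ≠ 0 := (Real.Gamma_pos_of_pos (by linarith)).ne'
  have hg2 : Real.Gamma (u / 2 + 1 / 2) ≠ 0 := (Real.Gamma_pos_of_pos (by linarith)).ne'
  have hs : Real.sqrt 2 ≠ 0 := by positivity
  rw [e, Real.log_div hg1 (mul_ne_zero hg2 hs), Real.log_mul hg2 hs,
    Real.log_sqrt (by norm_num : (0 : ℝ) ≤ 2)]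
  have h3 := (h2.mul h1).deriv
  rw [h0] at h3
  simp only [neg_zero, Complex.cpow_zero, one_mul] at h3
  refine Eq.trans h3 ?_
  push_cast
  ring
end

section
/- The derivative at s = 0 of the Dirichlet eta function, realized as s ↦ (1 − 2^{1−s}) · ζ(s) with ζ the Riemann zeta function, satisfies exp(2 · η′(0)) = π/2; equivalently, π/2 = e^{s₀} where s₀ = 2 · ∂Φ/∂s(−1, 0, 1). -/
/-!
The known values `ζ(0) = -1/2` and `ζ′(0) = -log(2π)/2` and the product rule give
`η′(0) = 2 log 2 · ζ(0) - ζ′(0) = -log 2 + log(2π)/2`. Hence `2 η′(0) = log(2π) - 2 log 2`, and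
exponentiating yields `2π/4 = π/2`.
-/

open Real Complex

/-- `exp(2·η′(0)) = π/2`, where `η(s) = (1 - 2^{1-s})ζ(s)` is the Dirichlet eta
function, i.e. `π/2 = e^{s₀}` with `s₀ = 2·∂Φ/∂s(-1, 0, 1)`. -/
theorem exp_two_deriv_eta_zero :
    Complex.exp (2 * deriv (fun s : ℂ => (1 - 2 ^ (1 - s)) * riemannZeta s) 0) =
      (π / 2 : ℝ) := by
  have hζ : HasDerivAt riemannZeta (-Complex.log (2 * π) / 2) 0 := by
    rw [← deriv_riemannZeta_zero]
    exact (differentiableAt_riemannZeta zero_ne_one).hasDerivAt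
  have hpow : HasDerivAt (fun s : ℂ => 1 - (2 : ℂ) ^ (1 - s)) (2 * Complex.log 2) 0 := by
    have h := (((hasDerivAt_id (0 : ℂ)).const_sub 1).const_cpow (c := 2)
      (Or.inl two_ne_zero)).const_sub 1
    simpa using h
  have hη : 2 * deriv (fun s : ℂ => (1 - 2 ^ (1 - s)) * riemannZeta s) 0 =
      Complex.log (2 * π) - (Complex.log 2 + Complex.log 2) := by
    rw [(hpow.fun_mul hζ).deriv, riemannZeta_zero, sub_zero, Complex.cpow_one]
    ring
  have hπ : (π : ℂ) ≠ 0 := Complex.ofReal_ne_zero.mpr Real.pi_ne_zero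
  rw [hη, Complex.exp_sub, Complex.exp_add, Complex.exp_log (mul_ne_zero two_ne_zero hπ),
    Complex.exp_log two_ne_zero]
  push_cast
  ring
end
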